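/- (Theorem 4) Suppose g is continuous, monotone in the sense ⟨g(y₁) − g(y₂), y₁ − y₂⟩ ≤ 0 for all y₁, y₂ ∈ Ω, and L-Lipschitz: ‖g(y₁) − g(y₂)‖ ≤ L‖y₁ − y₂‖ for all y₁, y₂ ∈ Ω. Suppose some y* ∈ Ω solves the variational inequality ⟨g(y*), y − y*⟩ ≤ 0 for all y ∈ Ω, and it is the unique such solution. Let 0 < t < (√2·L)⁻¹ and define the extra pseudo-gradient sequence ŷ_s = P_Ω(y_s + t·g(y_s)), y_{s+1} = P_Ω(y_s + t·g(ŷ_s)) from any y₀ ∈ Ω. Then the sequence (y_s) converges and lim_{s→∞} y_s = y*. -/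

import Mathlib

open Matrix Filter
open scoped BigOperators

noncomputable section

/-- Vectors in ℝ^k. -/
abbrev Vec (k : ℕ) := Fin k → ℝ

/-- Standard Euclidean inner product on ℝ^k. -/
def ip {k : ℕ} (u v : Vec k) : ℝ := ∑ i, u i * v i

/-- Standard Euclidean norm on ℝ^k. -/
def nrm {k : ℕ} (u : Vec k) : ℝ := Real.sqrt (ip u u)

/-- The space ℝⁿ × ℝⁿ × ℝᵐ of triples y = (x, λ, v). -/
abbrev Triple (n m : ℕ) := Vec n × Vec n × Vec m

/-- Euclidean inner product on the triple space. -/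
def ipT {n m : ℕ} (y z : Triple n m) : ℝ :=
  ip y.1 z.1 + ip y.2.1 z.2.1 + ip y.2.2 z.2.2

/-- Euclidean norm on the triple space. -/
def nrmT {n m : ℕ} (y : Triple n m) : ℝ := Real.sqrt (ipT y y)

/-- Ω = ℝ₊ⁿ × ℝ₊ⁿ × ℝ₊ᵐ. -/
def Om (n m : ℕ) : Set (Triple n m) :=
  {y | (∀ j, 0 ≤ y.1 j) ∧ (∀ j, 0 ≤ y.2.1 j) ∧ (∀ i, 0 ≤ y.2.2 i)}

/-- The operator g(x, λ, v) = ((I − A)ᵀλ − p(x) − Bᵀv, c(λ) − (I − A)x, Bx − r(v)). -/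
def gOp {n m : ℕ} (A : Matrix (Fin n) (Fin n) ℝ) (B : Matrix (Fin m) (Fin n) ℝ)
    (p c : Vec n → Vec n) (r : Vec m → Vec m) (y : Triple n m) : Triple n m :=
  ((1 - A)ᵀ *ᵥ y.2.1 - p y.1 - Bᵀ *ᵥ y.2.2,
   c y.2.1 - (1 - A) *ᵥ y.1,
   B *ᵥ y.1 - r y.2.2)

/-- P_Ω : componentwise positive part (Euclidean projection onto Ω). -/
def projOm {n m : ℕ} (y : Triple n m) : Triple n m :=
  (fun j => max (y.1 j) 0, fun j => max (y.2.1 j) 0, fun i => max (y.2.2 i) 0)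

/-
Write `ŷ = P(y + t g(y))` and `y⁺ = P(y + t g(ŷ))`. For a solution `z` of the variational
inequality, the obtuse-angle property of `P` and the monotonicity of `g` give
`‖y⁺ - z‖² ≤ ‖y - z‖² - ‖y - ŷ‖² + t² ‖g(ŷ) - g(y)‖² ≤ ‖y - z‖² - (1 - t² L²) ‖y - ŷ‖²`.
Since `t L < 1`, the distance to every solution decreases and `y - ŷ → 0`. A cluster point of the
sequence is a fixed point of `y ↦ P(y + t g(y))`, that is, a solution; as the distance to it
decreases, the whole sequence converges to it.
-/

section Sequences

lemma tendsto_zero_of_succ_le_sub_mul {a b : ℕ → ℝ} {c : ℝ} (hc : 0 < c) (ha : ∀ s, 0 ≤ a s)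
    (hb : ∀ s, 0 ≤ b s) (hab : ∀ s, a (s + 1) ≤ a s - c * b s) : Tendsto b atTop (nhds 0) := by
  refine (summable_of_sum_range_le (c := a 0 / c) hb fun s => ?_).tendsto_atTop_zero
  rw [le_div_iff₀' hc, Finset.mul_sum]
  calc ∑ i ∈ Finset.range s, c * b i
      ≤ ∑ i ∈ Finset.range s, (a i - a (i + 1)) :=
        Finset.sum_le_sum fun i _ => le_sub_comm.1 (hab i)
    _ = a 0 - a s := Finset.sum_range_sub' a s
    _ ≤ a 0 := sub_le_self _ (ha s)

lemma tendsto_nhds_of_antitone_dist_of_mapClusterPt {X : Type*} [PseudoMetricSpace X]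
    {y : ℕ → X} {a : X} (hdist : Antitone fun s => dist (y s) a)
    (ha : MapClusterPt a atTop y) : Tendsto y atTop (nhds a) := by
  refine Metric.tendsto_atTop.2 fun ε hε => ?_
  obtain ⟨N, hN⟩ := (ha.frequently (Metric.ball_mem_nhds a hε)).exists
  exact ⟨N, fun s hs => (hdist hs).trans_lt hN⟩

end Sequences

section Steps

variable {E : Type*} [AddCommGroup E] [Module ℝ E]

/-- The projected (pseudo-)gradient step `x ↦ P (x + t • g x)`, the predictor of the
extragradient method. -/
def projectedStep (P g : E → E) (t : ℝ) (x : E) : E := P (x + t • g x)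

/-- The extra (pseudo-)gradient step: `g` is evaluated at the predictor `projectedStep P g t x`,
but the step is taken from `x`. -/
def extragradientStep (P g : E → E) (t : ℝ) (x : E) : E := P (x + t • g (projectedStep P g t x))

end Steps

section VariationalInequality

open scoped RealInnerProductSpace NNReal

variable {E : Type*} [NormedAddCommGroup E] [InnerProductSpace ℝ E]

/-- `P` is the metric projection onto `K`, encoded by the obtuse-angle criterion; for convex `K`
this is equivalent to `P z` being the point of `K` nearest to `z`, see
`norm_eq_iInf_iff_real_inner_le_zero`. -/
structure IsMetricProjection (P : E → E) (K : Set E) : Prop where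
  mem (z : E) : P z ∈ K
  inner_le_zero (z : E) {w : E} (hw : w ∈ K) : ⟪z - P z, w - P z⟫ ≤ 0

/-- `z` solves the variational inequality of the operator `g` on `K`, with the sign convention of
a maximisation problem: `g` points in ascent directions. -/
structure IsVISolution (g : E → E) (K : Set E) (z : E) : Prop where
  mem : z ∈ K
  inner_le_zero {w : E} (hw : w ∈ K) : ⟪g z, w - z⟫ ≤ 0

variable {P g : E → E} {K : Set E} {t : ℝ}

namespace IsMetricProjection

lemma lipschitzWith (hP : IsMetricProjection P K) : LipschitzWith 1 P := by
  refine LipschitzWith.of_dist_le_mul fun x y => ?_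
  rw [NNReal.coe_one, one_mul, dist_eq_norm, dist_eq_norm]
  have firmly_nonexpansive : ‖P x - P y‖ * ‖P x - P y‖ ≤ ⟪x - y, P x - P y⟫ := by
    have hx := hP.inner_le_zero x (hP.mem y)
    have hy := hP.inner_le_zero y (hP.mem x)
    rw [← real_inner_self_eq_norm_mul_norm]
    simp only [inner_sub_left, inner_sub_right] at hx hy ⊢
    linarith
  have cauchy_schwarz := real_inner_le_norm (x - y) (P x - P y)
  by_contra! h
  nlinarith [norm_nonneg (x - y)]

lemma map_eq_self_iff (hP : IsMetricProjection P K) {z : E} : P z = z ↔ z ∈ K := by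
  refine ⟨fun h => h ▸ hP.mem z, fun hz => ?_⟩
  have h := hP.inner_le_zero z hz
  exact (sub_eq_zero.1 (real_inner_self_nonpos.1 h)).symm

lemma isClosed (hP : IsMetricProjection P K) : IsClosed K := by
  have : K = {z | P z = z} := Set.ext fun _ => hP.map_eq_self_iff.symm
  exact this ▸ isClosed_eq hP.lipschitzWith.continuous continuous_id

lemma sq_norm_map_sub_le (hP : IsMetricProjection P K) (z : E) {w : E} (hw : w ∈ K) :
    ‖P z - w‖ ^ 2 ≤ ‖z - w‖ ^ 2 - ‖z - P z‖ ^ 2 := by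
  have expand : ‖z - w‖ ^ 2 = ‖z - P z‖ ^ 2 - 2 * ⟪z - P z, w - P z⟫ + ‖P z - w‖ ^ 2 := by
    rw [norm_sub_rev (P z), ← norm_sub_sq_real, sub_sub_sub_cancel_right]
  linarith [hP.inner_le_zero z hw]

lemma isVISolution_of_projectedStep_eq_self (hP : IsMetricProjection P K) (ht : 0 < t) {z : E}
    (hz : projectedStep P g t z = z) : IsVISolution g K z := by
  rw [projectedStep] at hz
  refine ⟨hz ▸ hP.mem _, fun {w} hw => ?_⟩
  have angle := hP.inner_le_zero (z + t • g z) hw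
  rw [hz, add_sub_cancel_left, real_inner_smul_left] at angle
  exact nonpos_of_mul_nonpos_right angle ht

lemma continuousOn_projectedStep (hP : IsMetricProjection P K) (hg : ContinuousOn g K) :
    ContinuousOn (projectedStep P g t) K :=
  hP.lipschitzWith.continuous.comp_continuousOn (continuousOn_id.add (hg.const_smul t))

lemma sq_norm_extragradientStep_sub_le (hP : IsMetricProjection P K) (ht : 0 ≤ t) {x z : E}
    (hz : z ∈ K) (hascent : ⟪g (projectedStep P g t x), projectedStep P g t x - z⟫ ≤ 0) :
    ‖extragradientStep P g t x - z‖ ^ 2 ≤ ‖x - z‖ ^ 2 - ‖x - projectedStep P g t x‖ ^ 2 +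
      t ^ 2 * ‖g (projectedStep P g t x) - g x‖ ^ 2 := by
  set x' := projectedStep P g t x
  set x'' := extragradientStep P g t x
  have corrector : ‖x'' - z‖ ^ 2 ≤ ‖x + t • g x' - z‖ ^ 2 - ‖x + t • g x' - x''‖ ^ 2 :=
    hP.sq_norm_map_sub_le _ hz
  have predictor : ⟪x + t • g x - x', x'' - x'⟫ ≤ 0 := hP.inner_le_zero _ (hP.mem _)
  have expand : ‖x + t • g x' - z‖ ^ 2 - ‖x + t • g x' - x''‖ ^ 2 =
      ‖x - z‖ ^ 2 - ‖x - x'‖ ^ 2 + t ^ 2 * ‖g x' - g x‖ ^ 2 + 2 * (t * ⟪g x', x' - z⟫) +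
        2 * ⟪x + t • g x - x', x'' - x'⟫ - ‖t • (g x' - g x) - (x'' - x')‖ ^ 2 := by
    simp only [← real_inner_self_eq_norm_sq, inner_sub_left, inner_sub_right, inner_add_left,
      inner_add_right, real_inner_smul_left, real_inner_smul_right]
    simp only [real_inner_comm]
    ring
  have ascent : t * ⟪g x', x' - z⟫ ≤ 0 := mul_nonpos_of_nonneg_of_nonpos ht hascent
  linarith [sq_nonneg ‖t • (g x' - g x) - (x'' - x')‖]

lemma isVISolution_of_mapClusterPt (hP : IsMetricProjection P K) (hg : ContinuousOn g K)
    (ht : 0 < t) {y : ℕ → E} (hy : ∀ s, y s ∈ K)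
    (hres : Tendsto (fun s => y s - projectedStep P g t (y s)) atTop (nhds 0)) {a : E}
    (ha : MapClusterPt a atTop y) : IsVISolution g K a := by
  obtain ⟨φ, hφ, hlim⟩ := ha.tendsto_subseq
  have haK : a ∈ K := hP.isClosed.mem_of_tendsto hlim (.of_forall fun k => hy (φ k))
  have hlimK : Tendsto (y ∘ φ) atTop (nhdsWithin a K) :=
    tendsto_nhdsWithin_iff.2 ⟨hlim, .of_forall fun k => hy (φ k)⟩
  have hcont : ContinuousWithinAt (fun x => x - projectedStep P g t x) K a :=
    continuousWithinAt_id.sub (hP.continuousOn_projectedStep hg a haK)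
  have hfix : a - projectedStep P g t a = 0 :=
    tendsto_nhds_unique (hcont.tendsto.comp hlimK) (hres.comp hφ.tendsto_atTop)
  exact hP.isVISolution_of_projectedStep_eq_self ht (sub_eq_zero.1 hfix).symm

variable {L : ℝ≥0}

lemma sq_norm_extragradientStep_sub_le_of_lipschitzOnWith (hP : IsMetricProjection P K)
    (hmono : ∀ x ∈ K, ∀ y ∈ K, ⟪g x - g y, x - y⟫ ≤ 0) (hlip : LipschitzOnWith L g K)
    (ht : 0 ≤ t) {x z : E} (hx : x ∈ K) (hz : IsVISolution g K z) :
    ‖extragradientStep P g t x - z‖ ^ 2 ≤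
      ‖x - z‖ ^ 2 - (1 - (t * L) ^ 2) * ‖x - projectedStep P g t x‖ ^ 2 := by
  have hx' : projectedStep P g t x ∈ K := hP.mem _
  have hascent : ⟪g (projectedStep P g t x), projectedStep P g t x - z⟫ ≤ 0 := by
    have hm := hmono _ hx' z hz.mem
    rw [inner_sub_left] at hm
    linarith [hz.inner_le_zero hx']
  have hL : ‖g (projectedStep P g t x) - g x‖ ^ 2 ≤ (L * ‖x - projectedStep P g t x‖) ^ 2 := by
    rw [norm_sub_rev x]
    gcongr
    exact hlip.norm_sub_le hx' hx
  calc ‖extragradientStep P g t x - z‖ ^ 2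
      ≤ ‖x - z‖ ^ 2 - ‖x - projectedStep P g t x‖ ^ 2 +
          t ^ 2 * ‖g (projectedStep P g t x) - g x‖ ^ 2 :=
        hP.sq_norm_extragradientStep_sub_le ht hz.mem hascent
    _ ≤ ‖x - z‖ ^ 2 - ‖x - projectedStep P g t x‖ ^ 2 +
          t ^ 2 * (L * ‖x - projectedStep P g t x‖) ^ 2 := by gcongr
    _ = ‖x - z‖ ^ 2 - (1 - (t * L) ^ 2) * ‖x - projectedStep P g t x‖ ^ 2 := by ring

end IsMetricProjection

theorem stmt16_general [FiniteDimensional ℝ E] {L : ℝ≥0} (hP : IsMetricProjection P K)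
    (hmono : ∀ x ∈ K, ∀ y ∈ K, ⟪g x - g y, x - y⟫ ≤ 0) (hlip : LipschitzOnWith L g K)
    (hsol : ∃ z, IsVISolution g K z) (ht : 0 < t) (htL : t * L < 1)
    {y : ℕ → E} (hy0 : y 0 ∈ K) (hiter : ∀ s, y (s + 1) = extragradientStep P g t (y s)) :
    ∃ z, IsVISolution g K z ∧ Tendsto y atTop (nhds z) := by
  have hy (s : ℕ) : y s ∈ K := by
    cases s with
    | zero => exact hy0
    | succ s => exact hiter s ▸ hP.mem _
  have hq : 0 < 1 - (t * L) ^ 2 := sub_pos.2 (pow_lt_one₀ (by positivity) htL two_ne_zero)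
  have descent {z : E} (hz : IsVISolution g K z) (s : ℕ) : ‖y (s + 1) - z‖ ^ 2 ≤
      ‖y s - z‖ ^ 2 - (1 - (t * L) ^ 2) * ‖y s - projectedStep P g t (y s)‖ ^ 2 :=
    hiter s ▸ hP.sq_norm_extragradientStep_sub_le_of_lipschitzOnWith hmono hlip ht.le (hy s) hz
  have fejer {z : E} (hz : IsVISolution g K z) : Antitone fun s => dist (y s) z :=
    antitone_nat_of_succ_le fun s => by
      rw [dist_eq_norm, dist_eq_norm]
      refine le_of_sq_le_sq ?_ (norm_nonneg _)
      exact (descent hz s).trans (sub_le_self _ (by positivity))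
  obtain ⟨z, hz⟩ := hsol
  have sq_res : Tendsto (fun s => ‖y s - projectedStep P g t (y s)‖ ^ 2) atTop (nhds 0) :=
    tendsto_zero_of_succ_le_sub_mul hq (fun s => sq_nonneg ‖y s - z‖)
      (fun _ => sq_nonneg _) (descent hz)
  have res : Tendsto (fun s => y s - projectedStep P g t (y s)) atTop (nhds 0) :=
    tendsto_zero_iff_norm_tendsto_zero.2 <| by
      simpa only [Real.sqrt_sq (norm_nonneg _), Real.sqrt_zero] using sq_res.sqrt
  obtain ⟨a, -, ha⟩ := (isCompact_closedBall z (dist (y 0) z)).exists_mapClusterPt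
    (f := atTop) (u := y) (tendsto_principal.2 (.of_forall fun s => fejer hz s.zero_le))
  have haSol : IsVISolution g K a :=
    hP.isVISolution_of_mapClusterPt hlip.continuousOn ht hy res ha
  exact ⟨a, haSol, tendsto_nhds_of_antitone_dist_of_mapClusterPt (fejer haSol) ha⟩

end VariationalInequality

section EuclideanTriple

variable {k n m : ℕ}

lemma ip_eq_dotProduct (u v : Vec k) : ip u v = u ⬝ᵥ v := rfl

lemma ip_self_nonneg (u : Vec k) : 0 ≤ ip u u :=
  Finset.sum_nonneg fun i _ => mul_self_nonneg (u i)

lemma ipT_self_nonneg (u : Triple n m) : 0 ≤ ipT u u :=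
  add_nonneg (add_nonneg (ip_self_nonneg _) (ip_self_nonneg _)) (ip_self_nonneg _)

lemma norm_le_sqrt_ip (u : Vec k) : ‖u‖ ≤ √(ip u u) :=
  (pi_norm_le_iff_of_nonneg (Real.sqrt_nonneg _)).2 fun i => Real.abs_le_sqrt <|
    (sq (u i)).trans_le <|
      Finset.single_le_sum (f := fun j => u j * u j) (fun j _ => mul_self_nonneg (u j))
        (Finset.mem_univ i)

lemma norm_le_nrmT (u : Triple n m) : ‖u‖ ≤ nrmT u := by
  have h₁ := ip_self_nonneg u.1
  have h₂ := ip_self_nonneg u.2.1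
  have h₃ := ip_self_nonneg u.2.2
  refine max_le ?_ (max_le ?_ ?_) <;>
    exact (norm_le_sqrt_ip _).trans (Real.sqrt_le_sqrt (by unfold ipT; linarith))

lemma continuous_ipT_self : Continuous fun u : Triple n m => ipT u u := by
  unfold ipT ip; fun_prop

lemma isVonNBounded_setOf_ipT_self_lt_one :
    Bornology.IsVonNBounded ℝ {u : Triple n m | ipT u u < 1} :=
  (NormedSpace.isVonNBounded_ball ℝ (Triple n m) 1).subset fun u hu =>
    mem_ball_zero_iff.2 <| (norm_le_nrmT u).trans_lt <| (Real.sqrt_lt' one_pos).2 <| by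
      rwa [one_pow]

/-- The inner product `ipT` as the data from which an inner product space can be built. -/
abbrev ipTCore (n m : ℕ) : InnerProductSpace.Core ℝ (Triple n m) where
  inner := ipT
  conj_inner_symm u v := by simp [ipT, ip_eq_dotProduct, dotProduct_comm]
  re_inner_nonneg := ipT_self_nonneg
  add_left u v w := by
    simp only [ipT, ip_eq_dotProduct, Prod.fst_add, Prod.snd_add, add_dotProduct]
    ring
  smul_left u v a := by
    simp only [ipT, ip_eq_dotProduct, Prod.smul_fst, Prod.smul_snd, smul_dotProduct, smul_eq_mul,
      conj_trivial]
    ring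
  definite u hu := norm_le_zero_iff.1 <| (norm_le_nrmT u).trans_eq <| Real.sqrt_eq_zero'.2 hu.le

/-- The space of triples with the Euclidean norm `nrmT` in place of the supremum norm that
`Triple n m` carries as a product. Its topology is definitionally the product topology. -/
def EuclideanTriple (n m : ℕ) : Type := Triple n m

instance : NormedAddCommGroup (EuclideanTriple n m) :=
  (ipTCore n m).toNormedAddCommGroupOfTopology continuous_ipT_self.continuousAt
    isVonNBounded_setOf_ipT_self_lt_one

instance : InnerProductSpace ℝ (EuclideanTriple n m) :=
  InnerProductSpace.ofCoreOfTopology (ipTCore n m) continuous_ipT_self.continuousAt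
    isVonNBounded_setOf_ipT_self_lt_one

instance : FiniteDimensional ℝ (EuclideanTriple n m) :=
  inferInstanceAs (FiniteDimensional ℝ (Triple n m))

lemma sub_max_zero_mul_sub_max_zero_nonpos {R : Type*} [Ring R] [LinearOrder R] [IsOrderedRing R]
    (a : R) {w : R} (hw : 0 ≤ w) : (a - max a 0) * (w - max a 0) ≤ 0 := by
  rcases le_total a 0 with ha | ha
  · simpa only [max_eq_right ha, sub_zero] using mul_nonpos_of_nonpos_of_nonneg ha hw
  · simp only [max_eq_left ha, sub_self, zero_mul, le_refl]

lemma isMetricProjection_projOm :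
    IsMetricProjection (E := EuclideanTriple n m) projOm (Om n m) where
  mem _ := ⟨fun _ => le_max_right _ _, fun _ => le_max_right _ _, fun _ => le_max_right _ _⟩
  inner_le_zero z w hw := by
    obtain ⟨h₁, h₂, h₃⟩ := hw
    exact add_nonpos (add_nonpos
      (Finset.sum_nonpos fun i _ => sub_max_zero_mul_sub_max_zero_nonpos (z.1 i) (h₁ i))
      (Finset.sum_nonpos fun i _ => sub_max_zero_mul_sub_max_zero_nonpos (z.2.1 i) (h₂ i)))
      (Finset.sum_nonpos fun i _ => sub_max_zero_mul_sub_max_zero_nonpos (z.2.2 i) (h₃ i))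

end EuclideanTriple

lemma pos_and_mul_lt_one_of_lt_inv_sqrt_two_mul {t L : ℝ} (ht0 : 0 < t) (ht1 : t < (√2 * L)⁻¹) :
    0 < L ∧ t * L < 1 := by
  have hsL : 0 < √2 * L := inv_pos.1 (ht0.trans ht1)
  have hL : 0 < L := pos_of_mul_pos_right hsL (Real.sqrt_nonneg 2)
  refine ⟨hL, ?_⟩
  calc t * L ≤ t * (√2 * L) := by
        gcongr
        exact le_mul_of_one_le_left hL.le (Real.one_le_sqrt.2 one_le_two)
    _ < 1 := by rwa [← lt_div_iff₀ hsL, one_div]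

/-- Theorem 4: if g is continuous, monotone and L-Lipschitz on Ω, y* ∈ Ω
is the unique VI solution, and 0 < t < (√2·L)⁻¹, then the extra pseudo-gradient
sequence converges to y*. -/
theorem stmt16 {n m : ℕ} (hn : 0 < n) (hm : 0 < m)
    (A : Matrix (Fin n) (Fin n) ℝ) (B : Matrix (Fin m) (Fin n) ℝ)
    (p c : Vec n → Vec n) (r : Vec m → Vec m)
    (hcont : Continuous (gOp A B p c r))
    (L : ℝ)
    (hmono : ∀ y₁ ∈ Om n m, ∀ y₂ ∈ Om n m,
      ipT (gOp A B p c r y₁ - gOp A B p c r y₂) (y₁ - y₂) ≤ 0)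
    (hlip : ∀ y₁ ∈ Om n m, ∀ y₂ ∈ Om n m,
      nrmT (gOp A B p c r y₁ - gOp A B p c r y₂) ≤ L * nrmT (y₁ - y₂))
    (ys : Triple n m) (hys : ys ∈ Om n m)
    (hVI : ∀ y ∈ Om n m, ipT (gOp A B p c r ys) (y - ys) ≤ 0)
    (huniq : ∀ y' ∈ Om n m, (∀ y ∈ Om n m, ipT (gOp A B p c r y') (y - y') ≤ 0) → y' = ys)
    (t : ℝ) (ht0 : 0 < t) (ht1 : t < (Real.sqrt 2 * L)⁻¹)
    (y yh : ℕ → Triple n m) (hy0 : y 0 ∈ Om n m)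
    (hyh : ∀ s : ℕ, yh s = projOm (y s + t • gOp A B p c r (y s)))
    (hiter : ∀ s : ℕ, y (s + 1) = projOm (y s + t • gOp A B p c r (yh s))) :
    Tendsto y atTop (nhds ys) := by
  obtain ⟨hL, htL⟩ := pos_and_mul_lt_one_of_lt_inv_sqrt_two_mul ht0 ht1
  lift L to NNReal using hL.le
  obtain ⟨z, hz, hlim⟩ := stmt16_general (E := EuclideanTriple n m) isMetricProjection_projOm hmono
    (lipschitzOnWith_iff_norm_sub_le.2 hlip) ⟨ys, hys, hVI _⟩ ht0 htL hy0
    fun s => by rw [hiter, hyh]; rfl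
  exact huniq z hz.mem (fun _ => hz.inner_le_zero) ▸ hlim
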